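/- Let 𝒞 be a hereditary class of finite simple graphs all of whose members are circle graphs. Then 𝒞 has bounded twin-width if and only if 𝒞 does not contain all permutation graphs, i.e., if and only if there exists a permutation graph H such that no graph in 𝒞 is isomorphic to H. -/

import Mathlib

open Finset

/-- Two finsets of vertices are homogeneous to each other in `G`:
either all pairs are adjacent or no pair is adjacent. -/
def IsHomog {V : Type} (G : SimpleGraph V) (A B : Finset V) : Prop :=
  (∀ a ∈ A, ∀ b ∈ B, G.Adj a b) ∨ (∀ a ∈ A, ∀ b ∈ B, ¬ G.Adj a b)

/-- The red degree of a part `A` of a partition `P` of the vertices of `G`: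
the number of other parts that are not homogeneous to `A`.  (Along a
contraction sequence, viewed as a sequence of partitions into contracted
groups, this is exactly the red degree of the contracted vertex `A` in the
corresponding trigraph.) -/
noncomputable def redDegree {V : Type} [Fintype V] [DecidableEq V] (G : SimpleGraph V)
    (P : Finpartition (univ : Finset V)) (A : Finset V) : ℕ :=
  letI := Classical.decPred fun B : Finset V => ¬ IsHomog G A B
  ((P.parts.erase A).filter fun B => ¬ IsHomog G A B).card

/-- `Q` is obtained from `P` by merging two distinct parts,
i.e. by one contraction. -/
def IsMerge {V : Type} [Fintype V] [DecidableEq V]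
    (P Q : Finpartition (univ : Finset V)) : Prop :=
  ∃ A ∈ P.parts, ∃ B ∈ P.parts, A ≠ B ∧
    Q.parts = insert (A ∪ B) ((P.parts.erase A).erase B)

/-- `G` admits a contraction sequence of width at most `d`: a sequence of
partitions starting at the discrete partition (all parts singletons), ending
at the partition with (at most) one part, each obtained from the previous by
merging two parts, with all red degrees at most `d` throughout. -/
def TwinWidthLE {V : Type} [Fintype V] [DecidableEq V] (G : SimpleGraph V) (d : ℕ) : Prop :=
  ∃ L : List (Finpartition (univ : Finset V)),
    (∃ P₀, L.head? = some P₀ ∧ ∀ A ∈ P₀.parts, A.card = 1) ∧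
    (∃ P₁, L.getLast? = some P₁ ∧ P₁.parts.card ≤ 1) ∧
    List.Chain' IsMerge L ∧
    ∀ P ∈ L, ∀ A ∈ P.parts, redDegree G P A ≤ d

/-- `G` is a circle graph (in its interval-overlap form): vertices carry
rational intervals with pairwise distinct endpoints, and distinct vertices are
adjacent iff their intervals overlap without containment. -/
def IsCircleGraph {n : ℕ} (G : SimpleGraph (Fin n)) : Prop :=
  ∃ l r : Fin n → ℚ,
    (∀ v, l v < r v) ∧
    Function.Injective (fun p : Fin n × Bool => if p.2 then r p.1 else l p.1) ∧
    ∀ u v : Fin n, u ≠ v →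
      (G.Adj u v ↔ (l u < l v ∧ l v < r u ∧ r u < r v) ∨ (l v < l u ∧ l u < r v ∧ r v < r u))

/-- `G` is a permutation graph: there are two linear orders on the vertex set
such that distinct vertices are adjacent iff the two orders order them
oppositely. -/
def IsPermutationGraph {n : ℕ} (G : SimpleGraph (Fin n)) : Prop :=
  ∃ L1 L2 : LinearOrder (Fin n), ∀ u v : Fin n, u ≠ v →
    (G.Adj u v ↔ (L1.lt u v ∧ L2.lt v u) ∨ (L1.lt v u ∧ L2.lt u v))

/-- `H` is (isomorphic to) an induced subgraph of `G`. -/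
def IsInducedSubgraphOf {m n : ℕ} (H : SimpleGraph (Fin m)) (G : SimpleGraph (Fin n)) : Prop :=
  ∃ f : Fin m ↪ Fin n, ∀ u v, H.Adj u v ↔ G.Adj (f u) (f v)

/-- A class of finite graphs (one set of graphs for each number of vertices)
is hereditary: closed under induced subgraphs and isomorphism. -/
def Hereditary (C : ∀ n : ℕ, Set (SimpleGraph (Fin n))) : Prop :=
  ∀ (m n : ℕ) (H : SimpleGraph (Fin m)) (G : SimpleGraph (Fin n)),
    G ∈ C n → IsInducedSubgraphOf H G → H ∈ C m

/-!
The vertices distinguishing the first two contracted vertices become red neighbours of the new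
vertex. In the inversion graph of a slightly rotated `k × k` grid any two vertices are distinguished
by at least `k - 1` others, so permutation graphs have unbounded twin-width.

Conversely, represent each vertex `v` of a circle graph by the point `(l v, r v)` formed by the ends
of its interval, with integer coordinates. Consider the point pattern of a permutation graph `H`,
extended by one point to the right of and below all others. If `H` is not an induced subgraph, then
the points `(l v, r v)` avoid this pattern, and so do the point sets obtained by identifying
consecutive coordinates. By the Marcus–Tardos theorem the number of points is linear in the number
of coordinates, so an average row or column contains boundedly many of them. Hence two consecutive
coordinates can always be identified while every row and column stays bounded. Points without a
common coordinate are homogeneous to each other, so merging the vertices whose points coincide gives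
a contraction sequence of bounded width.
-/

/-! ### The Marcus–Tardos theorem -/

section Pattern

variable {ι α β γ δ : Type*}

/-- The permutation pattern with points `(x i, y i)` occurs in the point set `X`. Indices tied in
`x` or in `y` may be placed in any order in that coordinate. -/
def ContainsPattern [LT α] [LT β] [LT γ] [LT δ] (x : ι → α) (y : ι → β)
    (X : Finset (γ × δ)) : Prop :=
  ∃ p : ι → γ × δ, (∀ i, p i ∈ X) ∧ (∀ i j, x i < x j → (p i).1 < (p j).1) ∧
    ∀ i j, y i < y j → (p i).2 < (p j).2

lemma ContainsPattern.mono [LT α] [LT β] [LT γ] [LT δ] {x : ι → α} {y : ι → β}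
    {X Y : Finset (γ × δ)} (hXY : X ⊆ Y) (h : ContainsPattern x y X) : ContainsPattern x y Y :=
  let ⟨p, hp, hx, hy⟩ := h
  ⟨p, fun i ↦ hXY (hp i), hx, hy⟩

lemma ContainsPattern.of_image_map [LT α] [LT β] [LinearOrder γ] [LinearOrder δ] {γ' δ' : Type*}
    [LinearOrder γ'] [LinearOrder δ'] {x : ι → α} {y : ι → β} {X : Finset (γ × δ)}
    {f : γ → γ'} {g : δ → δ'} (hf : Monotone f) (hg : Monotone g)
    (h : ContainsPattern x y (X.image (Prod.map f g))) : ContainsPattern x y X := by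
  obtain ⟨p, hp, hx, hy⟩ := h
  choose q hqX hqp using fun i ↦ mem_image.mp (hp i)
  obtain rfl : (fun i ↦ Prod.map f g (q i)) = p := funext hqp
  exact ⟨q, hqX, fun i j hij ↦ hf.reflect_lt (hx i j hij), fun i j hij ↦ hg.reflect_lt (hy i j hij)⟩

lemma ContainsPattern.of_image_swap [LT α] [LT β] [LinearOrder γ] [LinearOrder δ]
    {x : ι → α} {y : ι → β} {X : Finset (γ × δ)}
    (h : ContainsPattern y x (X.image Prod.swap)) : ContainsPattern x y X := by
  obtain ⟨p, hp, hy, hx⟩ := h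
  choose q hqX hqp using fun i ↦ mem_image.mp (hp i)
  obtain rfl : (fun i ↦ (q i).swap) = p := funext hqp
  exact ⟨q, hqX, hx, hy⟩

lemma containsPattern_product [LinearOrder γ] [LinearOrder δ] {k l : ℕ} (x : ι → Fin k)
    (y : ι → Fin l) {S : Finset γ} {T : Finset δ} (hS : k ≤ #S) (hT : l ≤ #T) :
    ContainsPattern x y (S ×ˢ T) :=
  ⟨fun i ↦ (S.orderEmbOfCardLe hS (x i), T.orderEmbOfCardLe hT (y i)),
    fun _ ↦ mk_mem_product (orderEmbOfCardLe_mem ..) (orderEmbOfCardLe_mem ..),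
    fun _ _ hij ↦ (S.orderEmbOfCardLe hS).strictMono hij,
    fun _ _ hij ↦ (T.orderEmbOfCardLe hT).strictMono hij⟩

open Classical in
/-- The extremal function of the pattern `(x, y)`: the maximal number of points of the `m × m` grid
that avoid it. -/
noncomputable def patternExtremal [LT α] [LT β] (x : ι → α) (y : ι → β) (m : ℕ) : ℕ :=
  {X ∈ (range m ×ˢ range m).powerset | ¬ ContainsPattern x y X}.sup card

open Classical in
lemma card_le_patternExtremal [LT α] [LT β] {x : ι → α} {y : ι → β} {m : ℕ} {X : Finset (ℕ × ℕ)}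
    (hX : X ⊆ range m ×ˢ range m) (hav : ¬ ContainsPattern x y X) :
    #X ≤ patternExtremal x y m :=
  le_sup (f := card) (mem_filter.mpr ⟨mem_powerset.mpr hX, hav⟩)

open Classical in
lemma patternExtremal_le [LT α] [LT β] {x : ι → α} {y : ι → β} {m N : ℕ}
    (h : ∀ X ⊆ range m ×ˢ range m, ¬ ContainsPattern x y X → #X ≤ N) :
    patternExtremal x y m ≤ N :=
  Finset.sup_le fun X hX ↦
    have hX := mem_filter.mp hX
    h X (mem_powerset.mp hX.1) hX.2

lemma patternExtremal_le_sq [LT α] [LT β] (x : ι → α) (y : ι → β) (m : ℕ) :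
    patternExtremal x y m ≤ m ^ 2 :=
  patternExtremal_le fun X hX _ ↦ by simpa [sq] using card_le_card hX

end Pattern

section MarcusTardos

variable {ι : Type*} {k l s M m : ℕ} {x : ι → Fin k} {y : ι → Fin l} {X : Finset (ℕ × ℕ)}

/-- The points of `X` in the block with index `b`, when the grid is cut into blocks of side `s`. -/
def block (s : ℕ) (X : Finset (ℕ × ℕ)) (b : ℕ × ℕ) : Finset (ℕ × ℕ) :=
  {p ∈ X | Prod.map (· / s) (· / s) p = b}

/-- The indices of the nonempty blocks of side `s`. -/
def blocks (s : ℕ) (X : Finset (ℕ × ℕ)) : Finset (ℕ × ℕ) :=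
  X.image (Prod.map (· / s) (· / s))

/-- The indices of the nonempty blocks meeting at least `k` columns. -/
def wideBlocks (k s : ℕ) (X : Finset (ℕ × ℕ)) : Finset (ℕ × ℕ) :=
  {b ∈ blocks s X | k ≤ #((block s X b).image Prod.fst)}

/-- The indices of the nonempty blocks meeting at least `k` rows. -/
def tallBlocks (k s : ℕ) (X : Finset (ℕ × ℕ)) : Finset (ℕ × ℕ) :=
  {b ∈ blocks s X | k ≤ #((block s X b).image Prod.snd)}

lemma mem_block {p b : ℕ × ℕ} : p ∈ block s X b ↔ p ∈ X ∧ p.1 / s = b.1 ∧ p.2 / s = b.2 := by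
  simp only [block, mem_filter, Prod.ext_iff, Prod.map_fst, Prod.map_snd]

lemma monotone_div_const (s : ℕ) : Monotone fun n : ℕ ↦ n / s :=
  fun _ _ h ↦ Nat.div_le_div_right h

lemma not_containsPattern_blocks (s : ℕ) (hav : ¬ ContainsPattern x y X) :
    ¬ ContainsPattern x y (blocks s X) :=
  fun h ↦ hav (h.of_image_map (monotone_div_const s) (monotone_div_const s))

lemma blocks_subset (s : ℕ) (hX : X ⊆ range m ×ˢ range m) :
    blocks s X ⊆ range (m / s + 1) ×ˢ range (m / s + 1) := by
  refine image_subset_iff.mpr fun p hp ↦ ?_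
  have hpm := mem_product.mp (hX hp)
  simp only [mem_range] at hpm
  exact mem_product.mpr ⟨mem_range.mpr (Nat.lt_succ_of_le (Nat.div_le_div_right hpm.1.le)),
    mem_range.mpr (Nat.lt_succ_of_le (Nat.div_le_div_right hpm.2.le))⟩

lemma mem_Ico_of_div_eq {a b : ℕ} (hs : 0 < s) (h : a / s = b) :
    a ∈ Ico (b * s) (b * s + s) := by
  rw [Nat.div_eq_iff hs] at h
  rw [mem_Ico]
  omega

lemma card_block_le_sq (hs : 0 < s) (b : ℕ × ℕ) : #(block s X b) ≤ s ^ 2 := by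
  have hsub : block s X b ⊆ Ico (b.1 * s) (b.1 * s + s) ×ˢ Ico (b.2 * s) (b.2 * s + s) :=
    fun p hp ↦
      have hp := (mem_block.mp hp).2
      mem_product.mpr ⟨mem_Ico_of_div_eq hs hp.1, mem_Ico_of_div_eq hs hp.2⟩
  simpa [sq] using card_le_card hsub

lemma card_block_le_mul (b : ℕ × ℕ) :
    #(block s X b) ≤ #((block s X b).image Prod.fst) * #((block s X b).image Prod.snd) := by
  rw [← card_product]
  exact card_le_card subset_product

lemma card_le_of_tall_row (hs : 0 < s) (hav : ¬ ContainsPattern x y X) {J : ℕ} {B : Finset ℕ}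
    (hB : ∀ I ∈ B, l ≤ #((block s X (I, J)).image Prod.snd)) : #B ≤ 2 ^ s * k := by
  by_contra! hlt
  have hrows : ∀ I ∈ B, (block s X (I, J)).image Prod.snd ∈ (Ico (J * s) (J * s + s)).powerset :=
    fun I _ ↦ mem_powerset.mpr <| image_subset_iff.mpr fun p hp ↦
      mem_Ico_of_div_eq hs (mem_block.mp hp).2.2
  -- More than `k` of the blocks meet the same set `T` of rows.
  obtain ⟨T, -, hT⟩ := exists_lt_card_fiber_of_mul_lt_card_of_maps_to hrows
    (by simpa [card_powerset] using hlt)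
  set F := {I ∈ B | (block s X (I, J)).image Prod.snd = T}
  have hlT : l ≤ #T := by
    obtain ⟨I, hI⟩ := card_pos.mp (pos_of_gt hT)
    obtain ⟨hIB, rfl⟩ := mem_filter.mp hI
    exact hB I hIB
  refine hav (((containsPattern_product x y hT.le hlT).mono ?_).of_image_map
    (monotone_div_const s) monotone_id)
  rintro ⟨I, t⟩ hIt
  obtain ⟨hI, ht⟩ := mem_product.mp hIt
  rw [← (mem_filter.mp hI).2] at ht
  obtain ⟨p, hp, rfl⟩ := mem_image.mp ht
  exact mem_image.mpr ⟨p, (mem_block.mp hp).1, Prod.ext (mem_block.mp hp).2.1 rfl⟩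

lemma card_tallBlocks_le (hs : 0 < s) (hav : ¬ ContainsPattern x y X)
    (hM : ∀ b ∈ blocks s X, b.2 < M) : #(tallBlocks l s X) ≤ 2 ^ s * k * M := by
  have hmaps : ∀ b ∈ tallBlocks l s X, b.2 ∈ range M :=
    fun b hb ↦ mem_range.mpr (hM b (mem_filter.mp hb).1)
  rw [← card_range M]
  refine card_le_mul_card_image_of_maps_to hmaps _ fun J _ ↦ ?_
  have hinj : Set.InjOn Prod.fst ({b ∈ tallBlocks l s X | b.2 = J} : Set (ℕ × ℕ)) :=
    fun b hb b' hb' h ↦ Prod.ext h (hb.2.trans hb'.2.symm)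
  rw [← card_image_of_injOn (by simpa using hinj)]
  refine card_le_of_tall_row hs hav (J := J) fun I hI ↦ ?_
  obtain ⟨b, hb, rfl⟩ := mem_image.mp hI
  obtain ⟨hbt, rfl⟩ := mem_filter.mp hb
  exact (mem_filter.mp hbt).2

lemma block_image_swap (b : ℕ × ℕ) :
    block s (X.image Prod.swap) b.swap = (block s X b).image Prod.swap := by
  ext ⟨p, q⟩
  simp [mem_block, and_comm]

lemma blocks_image_swap : blocks s (X.image Prod.swap) = (blocks s X).image Prod.swap := by
  simp only [blocks, image_image]
  rfl

lemma wideBlocks_image_swap :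
    (wideBlocks k s X).image Prod.swap = tallBlocks k s (X.image Prod.swap) := by
  have himage (b : ℕ × ℕ) : ((block s X b).image Prod.swap).image Prod.snd =
      (block s X b).image Prod.fst := image_image
  simp only [tallBlocks, wideBlocks, blocks_image_swap, filter_image, block_image_swap, himage]

lemma card_wideBlocks_le (hs : 0 < s) (hav : ¬ ContainsPattern x y X)
    (hM : ∀ b ∈ blocks s X, b.1 < M) : #(wideBlocks k s X) ≤ 2 ^ s * l * M := by
  rw [← card_image_of_injective _ Prod.swap_injective, wideBlocks_image_swap]
  refine card_tallBlocks_le hs (fun h ↦ hav h.of_image_swap) fun b hb ↦ ?_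
  rw [blocks_image_swap] at hb
  obtain ⟨b', hb', rfl⟩ := mem_image.mp hb
  exact hM b' hb'

lemma card_block_le (hs : 0 < s) {b : ℕ × ℕ} (hb : b ∈ blocks s X) :
    #(block s X b) ≤ k * l + (if b ∈ wideBlocks k s X then s ^ 2 else 0) +
      (if b ∈ tallBlocks l s X then s ^ 2 else 0) := by
  have hsq := card_block_le_sq (X := X) hs b
  split_ifs with hw ht ht
  · omega
  · omega
  · omega
  · have hfst : #((block s X b).image Prod.fst) ≤ k :=
      (not_le.mp fun h ↦ hw (mem_filter.mpr ⟨hb, h⟩)).le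
    have hsnd : #((block s X b).image Prod.snd) ≤ l :=
      (not_le.mp fun h ↦ ht (mem_filter.mpr ⟨hb, h⟩)).le
    exact (card_block_le_mul b).trans (Nat.mul_le_mul hfst hsnd)

lemma card_le_blocks (hs : 0 < s) :
    #X ≤ k * l * #(blocks s X) + (#(wideBlocks k s X) + #(tallBlocks l s X)) * s ^ 2 := by
  have hW : wideBlocks k s X ⊆ blocks s X := filter_subset _ _
  have hT : tallBlocks l s X ⊆ blocks s X := filter_subset _ _
  calc #X = ∑ b ∈ blocks s X, #(block s X b) := card_eq_sum_card_image _ X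
    _ ≤ ∑ b ∈ blocks s X, (k * l + (if b ∈ wideBlocks k s X then s ^ 2 else 0) +
          (if b ∈ tallBlocks l s X then s ^ 2 else 0)) := sum_le_sum fun _ hb ↦ card_block_le hs hb
    _ = _ := by
      simp only [sum_add_distrib, sum_ite_mem, inter_eq_right.mpr hW, inter_eq_right.mpr hT,
        sum_const, smul_eq_mul]
      ring

lemma patternExtremal_le_recurrence (x : ι → Fin k) (y : ι → Fin l) (hs : 0 < s) (m : ℕ) :
    patternExtremal x y m ≤ k * l * patternExtremal x y (m / s + 1) +
      2 ^ s * (k + l) * s ^ 2 * (m / s + 1) := by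
  refine patternExtremal_le fun X hX hav ↦ ?_
  have hblocks := blocks_subset s hX
  have hfst : ∀ b ∈ blocks s X, b.1 < m / s + 1 :=
    fun b hb ↦ mem_range.mp (mem_product.mp (hblocks hb)).1
  have hsnd : ∀ b ∈ blocks s X, b.2 < m / s + 1 :=
    fun b hb ↦ mem_range.mp (mem_product.mp (hblocks hb)).2
  calc #X ≤ k * l * #(blocks s X) + (#(wideBlocks k s X) + #(tallBlocks l s X)) * s ^ 2 :=
        card_le_blocks hs
    _ ≤ k * l * patternExtremal x y (m / s + 1) +
          (2 ^ s * l * (m / s + 1) + 2 ^ s * k * (m / s + 1)) * s ^ 2 := by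
        gcongr
        · exact card_le_patternExtremal hblocks (not_containsPattern_blocks s hav)
        · exact card_wideBlocks_le hs hav hfst
        · exact card_tallBlocks_le hs hav hsnd
    _ = _ := by ring

lemma le_mul_of_recurrence {f : ℕ → ℕ} {a K : ℕ} (has : a + 2 ≤ s) (hsq : ∀ m, f m ≤ m ^ 2)
    (hrec : ∀ m, f m ≤ a * f (m / s + 1) + K * (m / s + 1)) (m : ℕ) :
    f m ≤ (2 * K + s ^ 2) * m := by
  set c := 2 * K + s ^ 2 with hc
  induction m using Nat.strong_induction_on with
  | _ m ih =>
  rcases le_or_gt m (s ^ 2) with hm | hm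
  · calc f m ≤ m * m := (hsq m).trans_eq (sq m)
      _ ≤ c * m := by gcongr; omega
  have hMs : (m / s + 1) * s ≤ m + s := by
    rw [add_mul, one_mul]
    gcongr
    exact Nat.div_mul_le_self m s
  have hMm : m / s + 1 < m := by nlinarith
  have has_sq : a * s ≤ m := by nlinarith
  have hsm : s ≤ m := by nlinarith
  have hKm : K * (m + m) ≤ c * m := by
    rw [hc]
    nlinarith
  refine Nat.le_of_mul_le_mul_right (c := s) ?_ (by omega)
  calc f m * s ≤ (a * (c * (m / s + 1)) + K * (m / s + 1)) * s := by
        gcongr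
        exact (hrec m).trans (by gcongr; exact ih _ hMm)
    _ = (a * c + K) * ((m / s + 1) * s) := by ring
    _ ≤ (a * c + K) * (m + s) := by gcongr
    _ = a * (c * m) + c * (a * s) + K * (m + s) := by ring
    _ ≤ a * (c * m) + c * m + K * (m + m) := by gcongr
    _ ≤ a * (c * m) + c * m + c * m := Nat.add_le_add_left hKm _
    _ = c * m * (a + 2) := by ring
    _ ≤ c * m * s := by gcongr

/-- **Marcus–Tardos theorem**. -/
theorem exists_patternExtremal_le (k l : ℕ) : ∃ c : ℕ, ∀ (ι : Type*) (x : ι → Fin k)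
    (y : ι → Fin l) (m : ℕ), patternExtremal x y m ≤ c * m :=
  ⟨_, fun _ x y ↦ le_mul_of_recurrence (s := k * l + 2) le_rfl (patternExtremal_le_sq x y)
    (patternExtremal_le_recurrence x y (by omega))⟩

end MarcusTardos

/-! ### Contraction sequences as chains of partitions -/

section Contraction

variable {V : Type} [Fintype V] [DecidableEq V] {G : SimpleGraph V} {d : ℕ}
  {P Q R : Finpartition (univ : Finset V)} {A B C : Finset V}

/-- The trigraph obtained from `G` by contracting every part of `P` has maximum red degree at most
`d`. -/
def MaxRedDegreeLE (G : SimpleGraph V) (d : ℕ) (P : Finpartition (univ : Finset V)) : Prop :=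
  ∀ A ∈ P.parts, redDegree G P A ≤ d

/-- A single contraction whose result has maximum red degree at most `d`. The red degrees of the
partition `P` before the contraction are not constrained. -/
def ContractionStep (G : SimpleGraph V) (d : ℕ) (P Q : Finpartition (univ : Finset V)) : Prop :=
  IsMerge P Q ∧ MaxRedDegreeLE G d Q

/-- A partial contraction sequence of width at most `d` leads from `P` to `Q`. -/
def ContractsTo (G : SimpleGraph V) (d : ℕ) :
    Finpartition (univ : Finset V) → Finpartition (univ : Finset V) → Prop :=
  Relation.ReflTransGen (ContractionStep G d)

open Classical in
lemma redDegree_eq (G : SimpleGraph V) (P : Finpartition (univ : Finset V)) (A : Finset V) :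
    redDegree G P A = #{B ∈ P.parts.erase A | ¬ IsHomog G A B} := by
  unfold redDegree
  congr

omit [Fintype V] [DecidableEq V] in
lemma isHomog_of_forall_adj_iff {u v : V} (h : ∀ a ∈ A, ∀ b ∈ B, (G.Adj a b ↔ G.Adj u v)) :
    IsHomog G A B := by
  by_cases huv : G.Adj u v
  · exact .inl fun a ha b hb ↦ (h a ha b hb).mpr huv
  · exact .inr fun a ha b hb ↦ (h a ha b hb).not.mpr huv

lemma maxRedDegreeLE_bot (G : SimpleGraph V) (d : ℕ) : MaxRedDegreeLE G d ⊥ := by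
  classical
  intro A hA
  obtain ⟨u, -, rfl⟩ := Finpartition.mem_bot_iff.mp hA
  have hhomog : ∀ B ∈ (⊥ : Finpartition (univ : Finset V)).parts, IsHomog G {u} B := by
    intro B hB
    obtain ⟨v, -, rfl⟩ := Finpartition.mem_bot_iff.mp hB
    exact isHomog_of_forall_adj_iff (u := u) (v := v) (by simp)
  rw [redDegree_eq, filter_false_of_mem fun B hB ↦ not_not.mpr (hhomog B (mem_of_mem_erase hB)),
    card_empty]
  exact Nat.zero_le d

lemma ContractsTo.twinWidthLE (h : ContractsTo G d ⊥ ⊤) : TwinWidthLE G d := by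
  obtain ⟨L, hL, hlast⟩ := List.exists_isChain_cons_of_relationReflTransGen h
  refine ⟨⊥ :: L, ⟨⊥, rfl, fun A hA ↦ ?_⟩, ⟨⊤, ?_, ?_⟩, hL.imp fun _ _ h ↦ h.1, ?_⟩
  · obtain ⟨v, -, rfl⟩ := Finpartition.mem_bot_iff.mp hA
    exact card_singleton v
  · rw [List.getLast?_eq_getLast_of_ne_nil (List.cons_ne_nil _ _), hlast]
  · exact card_le_one.mpr (Finpartition.parts_top_subsingleton _)
  · exact hL.induction (MaxRedDegreeLE G d) _ (fun _ _ h _ ↦ h.2) fun _ ↦ maxRedDegreeLE_bot G d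

lemma exists_parts_eq_insert_union (hA : A ∈ P.parts) (hB : B ∈ P.parts) :
    ∃ R : Finpartition (univ : Finset V),
      R.parts = insert (A ∪ B) ((P.parts.erase A).erase B) := by
  set S := (P.parts.erase A).erase B
  have hSP : S ⊆ P.parts := (erase_subset _ _).trans (erase_subset _ _)
  have hne : A ∪ B ≠ ∅ := union_eq_empty.not.mpr fun h ↦ P.ne_bot hA h.1
  have hdisj : Disjoint (S.sup id) (A ∪ B) := by
    refine Finset.disjoint_sup_left.mpr fun T hT ↦ ?_
    obtain ⟨hTB, hTA, hTP⟩ : T ≠ B ∧ T ≠ A ∧ T ∈ P.parts := by simpa [S] using hT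
    exact disjoint_union_right.mpr ⟨P.disjoint hTP hA hTA, P.disjoint hTP hB hTB⟩
  have hunion : S.sup id ∪ (A ∪ B) = univ := by
    refine eq_univ_of_forall fun v ↦ ?_
    obtain ⟨T, hT, hvT⟩ := P.exists_mem (mem_univ v)
    by_cases hTA : T = A
    · exact mem_union_right _ (mem_union_left _ (hTA ▸ hvT))
    by_cases hTB : T = B
    · exact mem_union_right _ (mem_union_right _ (hTB ▸ hvT))
    · exact mem_union_left _ (mem_sup.mpr
        ⟨T, mem_erase.mpr ⟨hTB, mem_erase.mpr ⟨hTA, hT⟩⟩, hvT⟩)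
  exact ⟨(P.ofSubset hSP rfl).extend hne hdisj hunion, rfl⟩

lemma IsMerge.lt (h : IsMerge P R) : P < R := by
  obtain ⟨A, hA, B, hB, hAB, hR⟩ := h
  have hABR : A ∪ B ∈ R.parts := hR ▸ mem_insert_self _ _
  refine lt_of_le_of_ne (fun T hT ↦ ?_) ?_
  · by_cases hTA : T = A
    · exact ⟨_, hABR, hTA.le.trans subset_union_left⟩
    by_cases hTB : T = B
    · exact ⟨_, hABR, hTB.le.trans subset_union_right⟩
    · exact ⟨T, hR ▸ mem_insert_of_mem (mem_erase.mpr ⟨hTB, mem_erase.mpr ⟨hTA, hT⟩⟩), le_rfl⟩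
  · rintro rfl
    obtain ⟨a, ha⟩ := P.nonempty_of_mem_parts hA
    obtain ⟨b, hb⟩ := P.nonempty_of_mem_parts hB
    exact hAB ((P.eq_of_mem_parts hA hABR ha (mem_union_left _ ha)).trans
      (P.eq_of_mem_parts hABR hB (mem_union_right _ hb) hb))

lemma subset_of_mem_parts_of_le (hPQ : P ≤ Q) (hA : A ∈ P.parts) (hC : C ∈ Q.parts) {u : V}
    (huA : u ∈ A) (huC : u ∈ C) : A ⊆ C := by
  obtain ⟨D, hD, hAD⟩ := hPQ hA
  rwa [Q.eq_of_mem_parts hC hD huC (hAD huA)]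

lemma exists_ne_parts_subset_of_lt (hPQ : P < Q) :
    ∃ A ∈ P.parts, ∃ B ∈ P.parts, A ≠ B ∧ ∃ C ∈ Q.parts, A ∪ B ⊆ C := by
  by_contra! hne
  refine hPQ.not_ge fun C hC ↦ ?_
  obtain ⟨u, huC⟩ := Q.nonempty_of_mem_parts hC
  obtain ⟨A, hA, huA⟩ := P.exists_mem (mem_univ u)
  refine ⟨A, hA, fun v hvC ↦ ?_⟩
  obtain ⟨B, hB, hvB⟩ := P.exists_mem (mem_univ v)
  by_contra hvA
  exact hne A hA B hB (fun hAB ↦ hvA (hAB ▸ hvB)) C hC <| union_subset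
    (subset_of_mem_parts_of_le hPQ.le hA hC huA huC)
    (subset_of_mem_parts_of_le hPQ.le hB hC hvB hvC)

lemma exists_isMerge_le_of_lt (hPQ : P < Q) : ∃ R, IsMerge P R ∧ R ≤ Q := by
  obtain ⟨A, hA, B, hB, hAB, C, hC, hABC⟩ := exists_ne_parts_subset_of_lt hPQ
  obtain ⟨R, hR⟩ := exists_parts_eq_insert_union hA hB
  refine ⟨R, ⟨A, hA, B, hB, hAB, hR⟩, fun T hT ↦ ?_⟩
  rw [hR] at hT
  obtain rfl | hT := mem_insert.mp hT
  · exact ⟨C, hC, hABC⟩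
  · exact hPQ.le (mem_of_mem_erase (mem_of_mem_erase hT))

lemma contractsTo_of_le (hPQ : P ≤ Q) (h : ∀ R, P ≤ R → R ≤ Q → MaxRedDegreeLE G d R) :
    ContractsTo G d P Q := by
  induction P using WellFoundedGT.induction with
  | _ P ih =>
  obtain rfl | hlt := hPQ.eq_or_lt
  · exact .refl
  obtain ⟨R, hPR, hRQ⟩ := exists_isMerge_le_of_lt hlt
  exact .head ⟨hPR, h R hPR.lt.le hRQ⟩ <|
    ih R hPR.lt hRQ fun S hRS hSQ ↦ h S (hPR.lt.le.trans hRS) hSQ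

end Contraction

/-! ### Partitions into colour classes -/

section FiberPartition

variable {V κ κ' : Type} [Fintype V] [DecidableEq V] {G : SimpleGraph V} {d : ℕ} {c : V → κ}
  {P : Finpartition (univ : Finset V)} {A : Finset V}

open Classical in
/-- The partition of the vertices into the colour classes of `c`. -/
noncomputable def fiberPartition (c : V → κ) : Finpartition (univ : Finset V) :=
  .ofSetoid (Setoid.ker c)

lemma mem_iff_of_mem_fiberPartition (hA : A ∈ (fiberPartition c).parts) {u v : V} (hu : u ∈ A) :
    v ∈ A ↔ c u = c v := by
  classical
  rw [← Finpartition.part_eq_of_mem _ hA hu, fiberPartition,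
    Finpartition.mem_part_ofSetoid_iff_rel]
  rfl

lemma le_fiberPartition_iff :
    P ≤ fiberPartition c ↔ ∀ A ∈ P.parts, ∀ u ∈ A, ∀ v ∈ A, c u = c v := by
  refine ⟨fun h A hA u hu v hv ↦ ?_, fun h A hA ↦ ?_⟩
  · obtain ⟨B, hB, hAB⟩ := h hA
    exact (mem_iff_of_mem_fiberPartition hB (hAB hu)).mp (hAB hv)
  · obtain ⟨u, hu⟩ := P.nonempty_of_mem_parts hA
    obtain ⟨B, hB, huB⟩ := (fiberPartition c).exists_mem (mem_univ u)
    exact ⟨B, hB, fun v hv ↦ (mem_iff_of_mem_fiberPartition hB huB).mpr (h A hA u hu v hv)⟩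

lemma fiberPartition_le_iff :
    fiberPartition c ≤ P ↔ ∀ A ∈ P.parts, ∀ u ∈ A, ∀ v, c u = c v → v ∈ A := by
  refine ⟨fun h A hA u hu v huv ↦ ?_, fun h B hB ↦ ?_⟩
  · obtain ⟨B, hB, huB⟩ := (fiberPartition c).exists_mem (mem_univ u)
    exact subset_of_mem_parts_of_le h hB hA huB hu ((mem_iff_of_mem_fiberPartition hB huB).mpr huv)
  · obtain ⟨u, hu⟩ := (fiberPartition c).nonempty_of_mem_parts hB
    obtain ⟨A, hA, huA⟩ := P.exists_mem (mem_univ u)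
    exact ⟨A, hA, fun v hv ↦ h A hA u huA v ((mem_iff_of_mem_fiberPartition hB hu).mp hv)⟩

lemma fiberPartition_le_comp (c : V → κ) (g : κ → κ') : fiberPartition c ≤ fiberPartition (g ∘ c) :=
  le_fiberPartition_iff.mpr fun _ hA _ hu _ hv ↦
    congrArg g ((mem_iff_of_mem_fiberPartition hA hu).mp hv)

lemma fiberPartition_eq_bot (hc : Function.Injective c) : fiberPartition c = ⊥ :=
  eq_bot_iff.mpr <| fiberPartition_le_iff.mpr fun _ _ _ hu _ huv ↦ hc huv ▸ hu

lemma fiberPartition_eq_top (hc : ∀ u v, c u = c v) : fiberPartition c = ⊤ :=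
  eq_top_iff.mpr <| le_fiberPartition_iff.mpr fun _ _ u _ v _ ↦ hc u v

lemma redDegree_le_card_colors [DecidableEq κ] (hP : fiberPartition c ≤ P) {p : κ → Prop}
    [DecidablePred p] (hA : ∀ B ∈ P.parts, ¬ IsHomog G A B → ∀ v ∈ B, p (c v)) :
    redDegree G P A ≤ #{q ∈ univ.image c | p q} := by
  classical
  rw [redDegree_eq]
  refine card_le_card_of_forall_subsingleton (fun B q ↦ ∃ v ∈ B, c v = q) (fun B hB ↦ ?_) ?_
  · obtain ⟨hBP, hAB⟩ := mem_filter.mp hB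
    have hBP := mem_of_mem_erase hBP
    obtain ⟨v, hv⟩ := P.nonempty_of_mem_parts hBP
    exact ⟨c v, mem_filter.mpr ⟨mem_image_of_mem c (mem_univ v), hA B hBP hAB v hv⟩, v, hv, rfl⟩
  · rintro q - B ⟨hB, u, hu, rfl⟩ B' ⟨hB', v, hv, hvu⟩
    have hBP := mem_of_mem_erase (mem_filter.mp hB).1
    have hBP' := mem_of_mem_erase (mem_filter.mp hB').1
    exact P.eq_of_mem_parts hBP hBP' hu (fiberPartition_le_iff.mp hP B' hBP' v hv u hvu)

lemma maxRedDegreeLE_of_fiberPartition_le [DecidableEq κ] {g : κ → κ'} {r : κ' → κ' → Prop}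
    [DecidableRel r]
    (hG : ∀ u u' v v', g (c u) = g (c u') → g (c v) = g (c v') → ¬ r (g (c u)) (g (c v)) →
      (G.Adj u' v' ↔ G.Adj u v))
    (hd : ∀ u, #{q ∈ univ.image c | r (g (c u)) (g q)} ≤ d)
    (hcP : fiberPartition c ≤ P) (hPg : P ≤ fiberPartition (g ∘ c)) : MaxRedDegreeLE G d P := by
  intro A hA
  obtain ⟨u, hu⟩ := P.nonempty_of_mem_parts hA
  refine (redDegree_le_card_colors hcP fun B hB hAB v hv ↦ ?_).trans (hd u)
  by_contra hr
  exact hAB <| isHomog_of_forall_adj_iff fun a ha b hb ↦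
    hG u a v b (le_fiberPartition_iff.mp hPg A hA u hu a ha)
      (le_fiberPartition_iff.mp hPg B hB v hv b hb) hr

end FiberPartition

/-! ### Coarsened interval representations -/

section OverlapModel

variable {α β V : Type*} {G : SimpleGraph V} {e : V → α × α}

/-- The intervals `p` and `q` have a common endpoint. -/
def ShareCoord (p q : α × α) : Prop :=
  p.1 = q.1 ∨ p.1 = q.2 ∨ p.2 = q.1 ∨ p.2 = q.2

/-- The intervals `p` and `q` intersect and neither contains the other. -/
def Overlap [LT α] (p q : α × α) : Prop :=
  (p.1 < q.1 ∧ q.1 < p.2 ∧ p.2 < q.2) ∨ (q.1 < p.1 ∧ p.1 < q.2 ∧ q.2 < p.2)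

/-- The intervals `e v` represent `G` as an overlap graph, except that nothing is said about the
adjacency of vertices whose intervals share an endpoint. Therefore endpoints may be identified. -/
def IsOverlapModel [LT α] (G : SimpleGraph V) (e : V → α × α) : Prop :=
  ∀ u v, ¬ ShareCoord (e u) (e v) → (G.Adj u v ↔ Overlap (e u) (e v))

instance [DecidableEq α] : DecidableRel (ShareCoord (α := α)) :=
  fun _ _ ↦ inferInstanceAs (Decidable (_ ∨ _))

lemma ShareCoord.map (f : α → β) {p q : α × α} (h : ShareCoord p q) :
    ShareCoord (p.map f f) (q.map f f) :=
  h.imp (congrArg f) <| .imp (congrArg f) <| .imp (congrArg f) (congrArg f)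

lemma overlap_map_iff [LinearOrder α] [LinearOrder β] {f : α → β} (hf : Monotone f) {p q : α × α}
    (h : ¬ ShareCoord (p.map f f) (q.map f f)) :
    Overlap (p.map f f) (q.map f f) ↔ Overlap p q := by
  have hlt {x y : α} (hxy : f x ≠ f y) : f x < f y ↔ x < y :=
    ⟨hf.reflect_lt, fun hlt ↦ (hf hlt.le).lt_of_ne hxy⟩
  simp only [ShareCoord, Prod.map_fst, Prod.map_snd, not_or] at h
  obtain ⟨h₁₁, h₁₂, h₂₁, h₂₂⟩ := h
  simp only [Overlap, Prod.map_fst, Prod.map_snd, hlt h₁₁, hlt h₁₂, hlt h₂₂,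
    hlt (Ne.symm h₁₁), hlt (Ne.symm h₂₁), hlt (Ne.symm h₂₂)]

lemma IsOverlapModel.map [LinearOrder α] [LinearOrder β] (h : IsOverlapModel G e) {f : α → β}
    (hf : Monotone f) : IsOverlapModel G (Prod.map f f ∘ e) := fun u v huv ↦
  (h u v fun hs ↦ huv (hs.map f)).trans (overlap_map_iff hf huv).symm

/-- The number of points of `X` on the cross formed by the column and the row `i`, after the
coordinates have been relabelled by `g`. -/
def crossDegree [DecidableEq β] (g : α → β) (X : Finset (α × α)) (i : β) : ℕ :=
  #{p ∈ X | g p.1 = i ∨ g p.2 = i}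

lemma crossDegree_image_map_le [DecidableEq β] (g : α → β) (X : Finset (α × α)) (i : β) :
    crossDegree id (X.image (Prod.map g g)) i ≤ crossDegree g X i := by
  rw [crossDegree, filter_image]
  exact card_image_le

lemma sum_crossDegree_le [DecidableEq β] (g : α → β) (X : Finset (α × α)) (S : Finset β) :
    ∑ i ∈ S, crossDegree g X i ≤ 2 * #X := by
  have hcross : ∀ p ∈ X, #{i ∈ S | g p.1 = i ∨ g p.2 = i} ≤ 2 := fun p _ ↦
    (card_le_card fun i hi ↦ by simpa [eq_comm] using (mem_filter.mp hi).2).trans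
      (card_le_two (a := g p.1) (b := g p.2))
  calc ∑ i ∈ S, crossDegree g X i = ∑ p ∈ X, #{i ∈ S | g p.1 = i ∨ g p.2 = i} :=
        by simpa only [crossDegree, card_filter] using sum_comm
    _ ≤ 2 * #X := by simpa [mul_comm] using sum_le_card_nsmul X _ 2 hcross

lemma crossDegree_le_one_of_pairwise [Fintype V] [DecidableEq α]
    (he : Pairwise fun u v ↦ ¬ ShareCoord (e u) (e v)) (i : α) :
    crossDegree id (univ.image e) i ≤ 1 := by
  refine card_le_one.mpr fun p hp q hq ↦ ?_
  simp only [mem_filter, mem_image, mem_univ, true_and, id] at hp hq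
  obtain ⟨⟨u, rfl⟩, hu⟩ := hp
  obtain ⟨⟨v, rfl⟩, hv⟩ := hq
  refine congrArg e (he.eq (not_not.mpr ?_))
  unfold ShareCoord
  grind

end OverlapModel

section MergeSucc

variable {a i m c d x : ℕ} {X : Finset (ℕ × ℕ)}

/-- The monotone map on `ℕ` that identifies `a` with `a + 1` and closes the gap. -/
def mergeSucc (a x : ℕ) : ℕ := if x ≤ a then x else x - 1

lemma mergeSucc_monotone (a : ℕ) : Monotone (mergeSucc a) := fun x y hxy ↦ by
  unfold mergeSucc
  split_ifs <;> omega

lemma mergeSucc_lt (ha : a ≤ m) (hx : x < m + 2) : mergeSucc a x < m + 1 := by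
  unfold mergeSucc
  split_ifs <;> omega

lemma mergeSucc_eq_self_iff : mergeSucc a x = a ↔ x = a ∨ x = a + 1 := by
  unfold mergeSucc
  split_ifs <;> omega

lemma mergeSucc_eq_iff_of_ne (hi : i ≠ a) :
    mergeSucc a x = i ↔ x = if i < a then i else i + 1 := by
  unfold mergeSucc
  split_ifs <;> omega

lemma crossDegree_mergeSucc_self_le (a : ℕ) (X : Finset (ℕ × ℕ)) :
    crossDegree (mergeSucc a) X a ≤ crossDegree id X a + crossDegree id X (a + 1) := by
  refine le_of_eq_of_le ?_ (card_union_le _ _)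
  rw [crossDegree, ← filter_or]
  simp only [mergeSucc_eq_self_iff, id, or_or_or_comm]

lemma crossDegree_mergeSucc_of_ne (hi : i ≠ a) (X : Finset (ℕ × ℕ)) :
    crossDegree (mergeSucc a) X i = crossDegree id X (if i < a then i else i + 1) := by
  simp only [crossDegree, mergeSucc_eq_iff_of_ne hi, id]

lemma crossDegree_mergeSucc_le_two_mul (hd : ∀ i, crossDegree id X i ≤ d) (a i : ℕ) :
    crossDegree (mergeSucc a) X i ≤ 2 * d := by
  obtain rfl | hi := eq_or_ne i a
  · linarith [crossDegree_mergeSucc_self_le i X, hd i, hd (i + 1)]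
  · rw [crossDegree_mergeSucc_of_ne hi]
    exact (hd _).trans (by omega)

lemma exists_crossDegree_mergeSucc_le (hX : #X ≤ c * (m + 2)) :
    ∃ a ≤ m, crossDegree (mergeSucc a) X a ≤ 8 * c := by
  have hshift : ∑ a ∈ range (m + 1), crossDegree id X (a + 1) ≤ 2 * #X := by
    simpa using sum_crossDegree_le id X ((range (m + 1)).map (addRightEmbedding 1))
  have hsum : ∑ a ∈ range (m + 1), crossDegree (mergeSucc a) X a ≤ ∑ a ∈ range (m + 1), 8 * c :=
    calc ∑ a ∈ range (m + 1), crossDegree (mergeSucc a) X a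
        ≤ ∑ a ∈ range (m + 1), (crossDegree id X a + crossDegree id X (a + 1)) :=
          sum_le_sum fun a _ ↦ crossDegree_mergeSucc_self_le a X
      _ ≤ 2 * #X + 2 * #X := by
          rw [sum_add_distrib]
          exact Nat.add_le_add (sum_crossDegree_le id X _) hshift
      _ ≤ ∑ a ∈ range (m + 1), 8 * c := by
          rw [sum_const, card_range, smul_eq_mul]
          nlinarith
  obtain ⟨a, ha, hac⟩ := exists_le_of_sum_le nonempty_range_add_one hsum
  exact ⟨a, by simpa [Nat.lt_succ_iff] using ha, hac⟩

end MergeSucc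

/-! ### Contracting circle graphs -/

section ContractModel

variable {α β V : Type} [Fintype V] [DecidableEq V] [LinearOrder α] [LinearOrder β]
  {G : SimpleGraph V} {d : ℕ}

lemma IsOverlapModel.contractsTo_map {e : V → α × α} (h : IsOverlapModel G e) {g : α → β}
    (hg : Monotone g) (hd : ∀ i, crossDegree g (univ.image e) i ≤ d) :
    ContractsTo G (2 * d) (fiberPartition e) (fiberPartition (Prod.map g g ∘ e)) := by
  refine contractsTo_of_le (fiberPartition_le_comp _ _) fun R heR hRg ↦
    maxRedDegreeLE_of_fiberPartition_le (r := ShareCoord) (fun u u' v v' hu hv huv ↦ ?_)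
      (fun u ↦ ?_) heR hRg
  · rw [(h.map hg) u v huv, (h.map hg) u' v' (by simpa only [Function.comp, ← hu, ← hv])]
    simp only [Function.comp, hu, hv]
  · calc _ ≤ #({q ∈ univ.image e | g q.1 = g (e u).1 ∨ g q.2 = g (e u).1} ∪
          {q ∈ univ.image e | g q.1 = g (e u).2 ∨ g q.2 = g (e u).2}) := by
          refine card_le_card fun q hq ↦ ?_
          simp only [ShareCoord, Prod.map_fst, Prod.map_snd] at hq
          simp only [mem_union, mem_filter]
          grind
      _ ≤ d + d := (card_union_le _ _).trans (Nat.add_le_add (hd _) (hd _))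
      _ = 2 * d := (two_mul d).symm

-- Among the `m + 1` pairs of consecutive coordinates, averaging finds one whose identification
-- keeps all cross degrees at most `d`; iterate until a single coordinate is left.
lemma IsOverlapModel.contractsTo_top {ι : Type*} {k l c m : ℕ} {x : ι → Fin k} {y : ι → Fin l}
    {e : V → ℕ × ℕ} (h : IsOverlapModel G e) (hc : ∀ m, patternExtremal x y m ≤ c * m)
    (hcd : 8 * c ≤ d) (hm : ∀ v, e v ∈ range m ×ˢ range m)
    (hav : ¬ ContainsPattern x y (univ.image e)) (hd : ∀ i, crossDegree id (univ.image e) i ≤ d) :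
    ContractsTo G (4 * d) (fiberPartition e) ⊤ := by
  induction m using Nat.twoStepInduction generalizing e with
  | zero | one =>
    rw [fiberPartition_eq_top fun u v ↦ ?_]
    · exact .refl
    · have := hm u
      simp_all
  | more m _ ih =>
    have hX : #(univ.image e) ≤ c * (m + 2) :=
      (card_le_patternExtremal (image_subset_iff.mpr fun v _ ↦ hm v) hav).trans (hc _)
    obtain ⟨a, ham, ha⟩ := exists_crossDegree_mergeSucc_le hX
    have hmono := mergeSucc_monotone a
    have hstep := h.contractsTo_map hmono (crossDegree_mergeSucc_le_two_mul hd a)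
    rw [← mul_assoc] at hstep
    have himage : univ.image (Prod.map (mergeSucc a) (mergeSucc a) ∘ e) =
        (univ.image e).image (Prod.map (mergeSucc a) (mergeSucc a)) := image_image.symm
    refine hstep.trans (ih (h.map hmono) (fun v ↦ ?_) ?_ fun i ↦ ?_)
    · have hv := mem_product.mp (hm v)
      exact mem_product.mpr ⟨mem_range.mpr (mergeSucc_lt ham (mem_range.mp hv.1)),
        mem_range.mpr (mergeSucc_lt ham (mem_range.mp hv.2))⟩
    · rw [himage]
      exact fun hcon ↦ hav (hcon.of_image_map hmono hmono)
    · rw [himage]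
      refine (crossDegree_image_map_le _ _ _).trans ?_
      obtain rfl | hi := eq_or_ne i a
      · exact ha.trans hcd
      · exact (crossDegree_mergeSucc_of_ne hi _).trans_le (hd _)

end ContractModel

section CircleGraph

variable {n : ℕ} {G : SimpleGraph (Fin n)}

lemma exists_rank {ι α : Type*} [Fintype ι] [LinearOrder α] {φ : ι → α}
    (hφ : Function.Injective φ) :
    ∃ ρ : ι ≃ Fin (Fintype.card ι), ∀ i j, ρ i < ρ j ↔ φ i < φ j :=
  letI := LinearOrder.lift' φ hφ
  let ρ := (Fintype.orderIsoFinOfCardEq ι rfl).symm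
  ⟨ρ.toEquiv, fun _ _ ↦ ρ.lt_iff_lt⟩

lemma IsCircleGraph.exists_overlapModel (hG : IsCircleGraph G) :
    ∃ (m : ℕ) (e : Fin n → ℕ × ℕ), IsOverlapModel G e ∧ (∀ v, e v ∈ range m ×ˢ range m) ∧
      (∀ v, (e v).1 < (e v).2) ∧ Pairwise fun u v ↦ ¬ ShareCoord (e u) (e v) := by
  obtain ⟨l, r, hlr, hinj, hadj⟩ := hG
  obtain ⟨ρ, hρ⟩ := exists_rank hinj
  refine ⟨Fintype.card (Fin n × Bool), fun v ↦ (ρ (v, false), ρ (v, true)),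
    fun u v huv ↦ ?_, fun v ↦ ?_, fun v ↦ ?_, fun u v huv hs ↦ ?_⟩
  · have hne : u ≠ v := by
      rintro rfl
      exact huv (.inl rfl)
    simpa only [Overlap, Fin.val_fin_lt, hρ, Bool.false_eq_true, if_true, if_false] using
      hadj u v hne
  · exact mem_product.mpr ⟨mem_range.mpr (Fin.is_lt _), mem_range.mpr (Fin.is_lt _)⟩
  · exact (hρ _ _).mpr (hlr v)
  · rcases hs with hs | hs | hs | hs <;>
      exact huv (congrArg Prod.fst (ρ.injective (Fin.ext hs)))

end CircleGraph

/-! ### Permutation graphs inside circle graphs -/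

section AnchoredPattern

variable {V W α β : Type*} {H : SimpleGraph W} {G : SimpleGraph V}

/-- The points `(x (some u), y (some u))` represent the permutation graph `H`, adjacency meaning
comparability in the product order. The extra point `none` is an anchor to the right of and below
all of them: in a point set above the diagonal it forces every left endpoint `x (some u)` to precede
every right endpoint `y (some v)`, so that comparable intervals overlap. -/
structure IsAnchoredPattern [LT α] [LT β] (H : SimpleGraph W) (x : Option W → α)
    (y : Option W → β) : Prop where
  lt_anchor (u : W) : x (some u) < x none
  anchor_lt (u : W) : y none < y (some u)
  injective_left : Function.Injective (x ∘ some)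
  injective_right : Function.Injective (y ∘ some)
  adj_iff (u v : W) : H.Adj u v ↔ (x (some u) < x (some v) ∧ y (some u) < y (some v)) ∨
    (x (some v) < x (some u) ∧ y (some v) < y (some u))

lemma IsPermutationGraph.exists_isAnchoredPattern {m : ℕ} {H : SimpleGraph (Fin m)}
    (hH : IsPermutationGraph H) :
    ∃ (k : ℕ) (x y : Option (Fin m) → Fin k), IsAnchoredPattern H x y := by
  obtain ⟨L₁, L₂, hadj⟩ := hH
  obtain ⟨ρ₁, hρ₁⟩ := @exists_rank _ _ _ L₁ id Function.injective_id
  obtain ⟨ρ₂, hρ₂⟩ := @exists_rank _ _ _ L₂ id Function.injective_id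
  refine ⟨_, fun o ↦ o.elim (.last _) fun u ↦ (ρ₁ u).castSucc,
    fun o ↦ o.elim 0 fun u ↦ (ρ₂ u).rev.succ, fun u ↦ Fin.castSucc_lt_last _,
    fun u ↦ (ρ₂ u).rev.succ_pos, (Fin.castSucc_injective _).comp ρ₁.injective,
    (Fin.succ_injective _).comp (Fin.rev_injective.comp ρ₂.injective), fun u v ↦ ?_⟩
  simp only [Option.elim_some, Fin.castSucc_lt_castSucc_iff, Fin.succ_lt_succ_iff, Fin.rev_lt_rev,
    hρ₁, hρ₂, id]
  obtain rfl | huv := eq_or_ne u v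
  · simp
  · exact hadj u v huv

lemma cmp_eq_cmp_of_lt_imp_lt {ι : Type*} [LinearOrder α] [LinearOrder β] {f : ι → α} {g : ι → β}
    (hf : Function.Injective f) (h : ∀ i j, f i < f j → g i < g j) (i j : ι) :
    cmp (g i) (g j) = cmp (f i) (f j) := by
  obtain hlt | heq | hgt := lt_trichotomy (f i) (f j)
  · rw [hlt.cmp_eq_lt, (h i j hlt).cmp_eq_lt]
  · rw [hf heq, cmp_self_eq_eq, cmp_self_eq_eq]
  · rw [hgt.cmp_eq_gt, (h j i hgt).cmp_eq_gt]

lemma IsAnchoredPattern.nonempty_embedding [LinearOrder α] [LinearOrder β] {γ : Type*}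
    [LinearOrder γ] [Fintype V] {x : Option W → α} {y : Option W → β} {e : V → γ × γ}
    (hH : IsAnchoredPattern H x y) (hG : IsOverlapModel G e) (he : ∀ v, (e v).1 ≤ (e v).2)
    (h : ContainsPattern x y (univ.image e)) : Nonempty (H ↪g G) := by
  obtain ⟨p, hp, hpx, hpy⟩ := h
  choose w _ hw using fun i ↦ mem_image.mp (hp i)
  obtain rfl : (fun i ↦ e (w i)) = p := funext hw
  have hsep (u v : W) : (e (w (some u))).1 < (e (w (some v))).2 :=
    ((hpx _ _ (hH.lt_anchor u)).trans_le (he _)).trans (hpy _ _ (hH.anchor_lt v))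
  have hleft := cmp_eq_cmp_of_lt_imp_lt hH.injective_left fun u v ↦ hpx (some u) (some v)
  have hright := cmp_eq_cmp_of_lt_imp_lt hH.injective_right fun u v ↦ hpy (some u) (some v)
  have hshare {u v : W} (huv : u ≠ v) : ¬ ShareCoord (e (w (some u))) (e (w (some v))) := by
    rintro (h | h | h | h)
    · exact huv (hH.injective_left ((eq_iff_eq_of_cmp_eq_cmp (hleft u v)).mp h))
    · exact (hsep u v).ne h
    · exact (hsep v u).ne' h
    · exact huv (hH.injective_right ((eq_iff_eq_of_cmp_eq_cmp (hright u v)).mp h))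
  have hinj : Function.Injective fun u : W ↦ w (some u) := fun u v huv ↦
    not_not.mp fun hne ↦ hshare hne (.inl (congrArg (fun v ↦ (e v).1) huv))
  refine ⟨⟨⟨_, hinj⟩, fun {u v} ↦ ?_⟩⟩
  obtain rfl | huv := eq_or_ne u v
  · simp
  · exact (hG _ _ (hshare huv)).trans <| by
      simp only [Overlap, hsep, true_and, hH.adj_iff, lt_iff_lt_of_cmp_eq_cmp (hleft _ _),
        lt_iff_lt_of_cmp_eq_cmp (hright _ _), Function.comp]

end AnchoredPattern

lemma IsPermutationGraph.exists_twinWidthLE {m : ℕ} {H : SimpleGraph (Fin m)}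
    (hH : IsPermutationGraph H) :
    ∃ t, ∀ (n : ℕ) (G : SimpleGraph (Fin n)), IsCircleGraph G → ¬ IsInducedSubgraphOf H G →
      TwinWidthLE G t := by
  obtain ⟨k, x, y, hxy⟩ := hH.exists_isAnchoredPattern
  obtain ⟨c, hc⟩ := exists_patternExtremal_le k k
  refine ⟨4 * (8 * c + 1), fun n G hG hHG ↦ ?_⟩
  obtain ⟨m, e, he, hem, hlt, hshare⟩ := hG.exists_overlapModel
  have hinj : Function.Injective e := fun u v huv ↦
    hshare.eq (not_not.mpr (.inl (congrArg Prod.fst huv)))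
  have hav : ¬ ContainsPattern x y (univ.image e) := fun h ↦
    let ⟨f⟩ := hxy.nonempty_embedding he (fun v ↦ (hlt v).le) h
    hHG ⟨f.toEmbedding, fun _ _ ↦ f.map_rel_iff.symm⟩
  have hcontr := he.contractsTo_top (hc _ x y) (Nat.le_succ _) hem hav fun i ↦
    (crossDegree_le_one_of_pairwise hshare i).trans (Nat.le_add_left _ _)
  rw [fiberPartition_eq_bot hinj] at hcontr
  exact hcontr.twinWidthLE

/-! ### Permutation graphs of large twin-width -/

section Distinguishers

variable {V : Type} {G : SimpleGraph V} {t : ℕ} {u v : V}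

/-- The vertices other than `u` and `v` that are adjacent to exactly one of them. They are the red
neighbours of the new vertex when `u` and `v` are the first vertices to be contracted. -/
def distinguishers (G : SimpleGraph V) (u v : V) : Set V :=
  {w | w ≠ u ∧ w ≠ v ∧ ¬ (G.Adj u w ↔ G.Adj v w)}

lemma distinguishers_comm (G : SimpleGraph V) (u v : V) :
    distinguishers G u v = distinguishers G v u := by
  ext w
  simp only [distinguishers, Set.mem_ofPred_eq, and_left_comm, iff_comm]

lemma ncard_distinguishers_comap {W : Type} (e : W ≃ V) (u v : W) :
    (distinguishers (G.comap e) u v).ncard = (distinguishers G (e u) (e v)).ncard := by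
  rw [← Set.ncard_image_of_injective _ e.injective]
  congr 1
  ext w
  simp [distinguishers, Equiv.image_eq_preimage_symm, Equiv.symm_apply_eq]

lemma not_isHomog_of_mem_distinguishers {w : V} (hw : w ∈ distinguishers G u v) {A : Finset V}
    (hu : u ∈ A) (hv : v ∈ A) : ¬ IsHomog G A {w} := by
  have hwit := hw.2.2
  rintro (h | h) <;> simp [h u hu w, h v hv w] at hwit

variable [Fintype V] [DecidableEq V]

lemma ncard_distinguishers_le_redDegree {Q : Finpartition (univ : Finset V)}
    (hQ : Q.parts = insert ({u} ∪ {v}) (((⊥ : Finpartition univ).parts.erase {u}).erase {v})) :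
    (distinguishers G u v).ncard ≤ redDegree G Q ({u} ∪ {v}) := by
  classical
  rw [redDegree_eq, ← Set.ncard_coe_finset]
  refine Set.ncard_le_ncard_of_injOn _ (fun w hw ↦ ?_) (singleton_injective.injOn)
  have hne : ({w} : Finset V) ≠ {u} ∪ {v} := fun h ↦
    hw.1 (mem_singleton.mp (h ▸ mem_union_left _ (mem_singleton_self u))).symm
  refine mem_coe.mpr (mem_filter.mpr ⟨mem_erase.mpr ⟨hne, ?_⟩,
    not_isHomog_of_mem_distinguishers hw (by simp) (by simp)⟩)
  rw [hQ]
  simp [hw.1, hw.2.1]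

lemma TwinWidthLE.exists_isMerge_bot [Nontrivial V] (h : TwinWidthLE G t) :
    ∃ Q, IsMerge ⊥ Q ∧ MaxRedDegreeLE G t Q := by
  obtain ⟨L, ⟨P, hP, hsingle⟩, ⟨P', hP', hcard⟩, hmerge, hred⟩ := h
  obtain rfl : P = ⊥ := eq_bot_iff.mpr fun A hA ↦
    let ⟨a, ha⟩ := card_eq_one.mp (hsingle A hA)
    ⟨A, Finpartition.mem_bot_iff.mpr ⟨a, mem_univ a, ha.symm⟩, le_rfl⟩
  match L, hP, hP', hmerge, hred with
  | [_], rfl, rfl, _, _ =>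
    exact absurd ((Finpartition.card_bot _).symm.trans_le hcard)
      (Fintype.one_lt_card (α := V)).not_ge
  | _ :: Q :: _, rfl, _, hmerge, hred =>
    exact ⟨Q, (List.isChain_cons_cons.mp hmerge).1, hred Q (by simp)⟩

lemma TwinWidthLE.exists_ncard_distinguishers_le [Nontrivial V] (h : TwinWidthLE G t) :
    ∃ u v, u ≠ v ∧ (distinguishers G u v).ncard ≤ t := by
  obtain ⟨Q, ⟨A, hA, B, hB, hAB, hQ⟩, hred⟩ := h.exists_isMerge_bot
  obtain ⟨u, -, rfl⟩ := Finpartition.mem_bot_iff.mp hA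
  obtain ⟨v, -, rfl⟩ := Finpartition.mem_bot_iff.mp hB
  exact ⟨u, v, singleton_injective.ne_iff.mp hAB,
    (ncard_distinguishers_le_redDegree hQ).trans (hred _ (hQ ▸ mem_insert_self _ _))⟩

end Distinguishers

section GridGraph

variable {k : ℕ}

/-- The inversion graph of the `k × k` grid rotated slightly clockwise, so that no two of its points
share a coordinate: points in the same row are adjacent, points in the same column are not. -/
def gridGraph (k : ℕ) : SimpleGraph (Fin k × Fin k) where
  Adj u w := (u.1 < w.1 ∧ w.2 ≤ u.2) ∨ (w.1 < u.1 ∧ u.2 ≤ w.2)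
  symm := ⟨fun _ _ h ↦ h.symm⟩
  loopless := ⟨fun _ h ↦ h.elim (fun h ↦ h.1.false) fun h ↦ h.1.false⟩

lemma sub_one_le_ncard_of_injective {V : Type*} [Finite V] {S : Set V} {f : Fin k → V} {a : Fin k}
    (hf : Function.Injective f) (hS : ∀ i ≠ a, f i ∈ S) : k - 1 ≤ S.ncard := by
  have hcard : ({a}ᶜ : Set (Fin k)).ncard = k - 1 := by
    rw [Set.ncard_compl, Set.ncard_singleton, Nat.card_fin]
  exact hcard.ge.trans (Set.ncard_le_ncard_of_injOn f hS hf.injOn)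

-- Two points are told apart by one point of almost every column if one is above and not to the left
-- of the other, and by one point of almost every row if one is to the left and not below the other.
lemma sub_one_le_ncard_distinguishers_gridGraph {u v : Fin k × Fin k} (huv : u ≠ v) :
    k - 1 ≤ (distinguishers (gridGraph k) u v).ncard := by
  wlog h : (u.1 ≤ v.1 ∧ u.2 < v.2) ∨ (v.1 < u.1 ∧ u.2 ≤ v.2) generalizing u v
  · rw [distinguishers_comm]
    have hne : ¬ (u.1 = v.1 ∧ u.2 = v.2) := Prod.ext_iff.not.mp huv
    exact this huv.symm (by omega)
  obtain ⟨i, j⟩ := u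
  obtain ⟨i', j'⟩ := v
  dsimp only at h
  obtain ⟨hi, hj⟩ | ⟨hi, hj⟩ := h
  · refine sub_one_le_ncard_of_injective (f := fun a ↦ (a, if a ≤ i' then j else j')) (a := i)
      (fun _ _ h ↦ congrArg Prod.fst h) fun a ha ↦ ?_
    simp only [distinguishers, gridGraph, Set.mem_ofPred_eq, ne_eq, Prod.mk.injEq]
    split_ifs <;> omega
  · refine sub_one_le_ncard_of_injective (f := fun b ↦ (if b ≤ j' then i else i', b)) (a := j)
      (fun _ _ h ↦ congrArg Prod.snd h) fun b hb ↦ ?_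
    simp only [distinguishers, gridGraph, Set.mem_ofPred_eq, ne_eq, Prod.mk.injEq]
    split_ifs <;> omega

lemma isPermutationGraph_comap_gridGraph {n : ℕ} (e : Fin n ≃ Fin k × Fin k) :
    IsPermutationGraph ((gridGraph k).comap e) := by
  let φ₁ : Fin n → Fin k ×ₗ Fin k := toLex ∘ e
  let φ₂ : Fin n → Fin k ×ₗ (Fin k)ᵒᵈ := fun u ↦ toLex ((e u).2, .toDual (e u).1)
  have hφ₁ : Function.Injective φ₁ := toLex.injective.comp e.injective
  have hφ₂ : Function.Injective φ₂ := fun u v huv ↦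
    have h := Prod.ext_iff.mp (toLex.injective huv)
    e.injective (Prod.ext (OrderDual.toDual.injective h.2) h.1)
  refine ⟨.lift' φ₁ hφ₁, .lift' φ₂ hφ₂, fun u v _ ↦ ?_⟩
  change (gridGraph k).Adj (e u) (e v) ↔ (φ₁ u < φ₁ v ∧ φ₂ v < φ₂ u) ∨ (φ₁ v < φ₁ u ∧ φ₂ u < φ₂ v)
  simp only [φ₁, φ₂, Prod.Lex.toLex_lt_toLex, gridGraph, Function.comp, OrderDual.toDual_lt_toDual]
  omega

lemma not_twinWidthLE_comap_gridGraph {W : Type} [Fintype W] [DecidableEq W] {t : ℕ}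
    (e : W ≃ Fin (t + 2) × Fin (t + 2)) : ¬ TwinWidthLE ((gridGraph (t + 2)).comap e) t := by
  intro h
  have : Nontrivial W := e.nontrivial
  obtain ⟨u, v, huv, hle⟩ := h.exists_ncard_distinguishers_le
  rw [ncard_distinguishers_comap] at hle
  have hge := sub_one_le_ncard_distinguishers_gridGraph (e.injective.ne huv)
  omega

lemma exists_isPermutationGraph_not_twinWidthLE (t : ℕ) :
    ∃ (n : ℕ) (H : SimpleGraph (Fin n)), IsPermutationGraph H ∧ ¬ TwinWidthLE H t :=
  ⟨_, _, isPermutationGraph_comap_gridGraph finProdFinEquiv.symm,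
    not_twinWidthLE_comap_gridGraph finProdFinEquiv.symm⟩

end GridGraph

/-- A hereditary class of circle graphs has bounded twin-width iff it
excludes some permutation graph. -/
theorem stmt0 (C : ∀ n : ℕ, Set (SimpleGraph (Fin n)))
    (hher : Hereditary C)
    (hcirc : ∀ n : ℕ, ∀ G ∈ C n, IsCircleGraph G) :
    (∃ t : ℕ, ∀ n : ℕ, ∀ G ∈ C n, TwinWidthLE G t) ↔
      (∃ (m : ℕ) (H : SimpleGraph (Fin m)), IsPermutationGraph H ∧
        ∀ (k : ℕ), ∀ G ∈ C k, ¬ Nonempty (G ≃g H)) := by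
  constructor
  · rintro ⟨t, ht⟩
    obtain ⟨n, H, hH, htH⟩ := exists_isPermutationGraph_not_twinWidthLE t
    refine ⟨n, H, hH, ?_⟩
    rintro k G hG ⟨φ⟩
    exact htH <|
      ht _ _ (hher _ _ _ G hG ⟨φ.symm.toEmbedding.toEmbedding, fun _ _ ↦ φ.symm.map_rel_iff.symm⟩)
  · rintro ⟨m, H, hH, hHC⟩
    obtain ⟨t, ht⟩ := hH.exists_twinWidthLE
    exact ⟨t, fun n G hG ↦ ht n G (hcirc n G hG) fun hHG ↦
      hHC m H (hher m n H G hG hHG) ⟨.refl⟩⟩
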